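/- Let θ = 1, t₀ > 0, γ₁ > 2 and γ₂ ≥ γ₁, and suppose α ≥ (γ₁ + 2)/(γ₁ − 2). Let x : [t₀, ∞) → ℝⁿ be a solution of the perturbed inertial ODE with damping α/t. Assume that ∫_{t₀}^∞ t^{γ₂/(γ₂ − 2)} ‖g(t)‖ dt < ∞ and that F satisfies hypotheses H1(γ₁) and H2(γ₂) and admits a unique minimizer. Then there exist C > 0 and t₁ ≥ t₀ such that for all t ≥ t₁, F(x(t)) − F* ≤ C · t^{−2γ₂/(γ₂ − 2)}. -/

import Mathlib

open MeasureTheory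
open scoped RealInnerProductSpace

/-!
A trajectory is controlled by the energy
`E(t) = t² (F (x t) - F z) + ½ ‖κ (x t - z) + t x'(t)‖² + ξ/2 ‖x t - z‖²`,
for two choices of `(κ, ξ)`. In both, `t E' + c E ≤ t² ⟪g, κ (x - z) + t x'⟫` for a suitable `c`, so
that, as soon as `t ^ p E` (with `p ≤ c`) controls `t ^ p ‖κ (x - z) + t x'‖²`, an integral Grönwall
argument bounds `t ^ p E`.

* Convexity alone allows `c = p = κ - 2` with `0 < κ ≤ min 2 (2 α / 3)` and `ξ ≥ 0`. This gives
  `F (x t) - F z = O(t ^ (-κ))`, and the growth of `F` around `z` turns it into `x t → z`.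
* Once `x t` stays where both local hypotheses hold, take `κ = 2 / (γ₁ - 2)`, `c = 2 κ` and
  `p = 4 / (γ₂ - 2)`. Now `ξ = κ (κ + 1 - α) ≤ 0`, but since `p γ₂ / 2 = p + 2` the growth condition
  and Young's inequality absorb the negative term `t ^ p ‖x - z‖²` in `t ^ (p + 2) (F (x t) - F z)`.
-/

open Filter Set
open scoped Gradient Topology

theorem continuousOn_rpow_const_Ici {T : ℝ} (hT : 0 < T) (r : ℝ) :
    ContinuousOn (fun t : ℝ ↦ t ^ r) (Ici T) :=
  continuousOn_id.rpow_const fun _ ht ↦ Or.inl (hT.trans_le ht).ne'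

theorem integrableOn_rpow_mul_of_le {φ : ℝ → ℝ} {T r q : ℝ} (hT : 0 < T) (hrq : r ≤ q)
    (hφ : ContinuousOn φ (Ici T)) (hint : IntegrableOn (fun t ↦ t ^ q * φ t) (Ici T)) :
    IntegrableOn (fun t ↦ t ^ r * φ t) (Ici T) := by
  refine (hint.norm.const_mul (T ^ (r - q))).mono'
    (((continuousOn_rpow_const_Ici hT r).mul hφ).aestronglyMeasurable measurableSet_Ici) ?_
  refine (ae_restrict_iff' measurableSet_Ici).2 (.of_forall fun t ht ↦ ?_)
  have ht0 : 0 < t := hT.trans_le ht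
  calc ‖t ^ r * φ t‖ = t ^ (r - q) * ‖t ^ q * φ t‖ := by
        simp only [norm_mul, Real.norm_of_nonneg (Real.rpow_nonneg ht0.le _)]
        rw [← mul_assoc, ← Real.rpow_add ht0, sub_add_cancel]
    _ ≤ T ^ (r - q) * ‖t ^ q * φ t‖ := by
        gcongr ?_ * _
        exact Real.rpow_le_rpow_of_nonpos hT ht (sub_nonpos.2 hrq)

theorem tendsto_zero_of_rpow_mul_le {f : ℝ → ℝ} {T κ M : ℝ} (hκ : 0 < κ)
    (hf : ∀ t ≥ T, 0 ≤ f t) (hM : ∀ t ≥ T, t ^ κ * f t ≤ M) : Tendsto f atTop (𝓝 0) := by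
  have hdecay : Tendsto (fun t : ℝ ↦ M / t ^ κ) atTop (𝓝 0) :=
    (tendsto_rpow_atTop hκ).const_div_atTop M
  refine squeeze_zero' ((eventually_ge_atTop T).mono hf) ?_ hdecay
  filter_upwards [eventually_ge_atTop T, eventually_gt_atTop 0] with t ht ht0
  exact (le_div_iff₀' (by positivity)).2 (hM t ht)

theorem exists_mul_le_mul_rpow_add {a b q : ℝ} (ha : 0 ≤ a) (hb : 0 < b) (hq : 1 < q) :
    ∃ C, ∀ w ≥ 0, a * w ≤ b * w ^ q + C := by
  obtain ⟨w₀, hw₀⟩ := eventually_atTop.1 <|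
    (tendsto_rpow_atTop (sub_pos.2 hq)).eventually_ge_atTop (a / b)
  refine ⟨a * max w₀ 0, fun w hw ↦ ?_⟩
  rcases le_total w (max w₀ 0) with hsmall | hlarge
  · have : 0 ≤ b * w ^ q := by positivity
    linarith [mul_le_mul_of_nonneg_left hsmall ha]
  · have hslope : a ≤ b * w ^ (q - 1) :=
      (div_le_iff₀' hb).1 (hw₀ w ((le_max_left _ _).trans hlarge))
    have hpow : w ^ q = w ^ (q - 1) * w := by
      rw [← Real.rpow_add_one' hw (by linarith), sub_add_cancel]
    have : 0 ≤ a * max w₀ 0 := by positivity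
    calc a * w ≤ b * w ^ (q - 1) * w := by gcongr
      _ ≤ b * w ^ q + a * max w₀ 0 := by rw [hpow]; linarith

theorem exists_mul_rpow_mul_sq_le {a b p q : ℝ} (ha : 0 ≤ a) (hb : 0 < b) (hq : 2 < q)
    (hpq : p * (q / 2) = p + 2) :
    ∃ C, ∀ t > 0, ∀ r ≥ 0, a * (t ^ p * r ^ 2) ≤ b * (t ^ (p + 2) * r ^ q) + C := by
  obtain ⟨C, hC⟩ := exists_mul_le_mul_rpow_add ha hb (q := q / 2) (by linarith)
  refine ⟨C, fun t ht r hr ↦ (hC (t ^ p * r ^ 2) (by positivity)).trans_eq ?_⟩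
  rw [Real.mul_rpow (by positivity) (by positivity), ← Real.rpow_mul ht.le, hpq,
    ← Real.rpow_natCast_mul hr, Nat.cast_ofNat, mul_div_cancel₀ q two_ne_zero]

section Gronwall

theorem le_mul_exp_integral_of_deriv_lt_mul {f f' ω : ℝ → ℝ} {a A : ℝ} (hA : 0 ≤ A)
    (hf : ∀ t ≥ a, HasDerivAt f (f' t) t) (hω : Continuous ω) (hω0 : ∀ t, 0 ≤ ω t)
    (hfa : f a ≤ A) (hlt : ∀ t ≥ a, A ≤ f t → f' t < ω t * f t) {t : ℝ} (ht : a ≤ t) :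
    f t ≤ A * Real.exp (∫ s in a..t, ω s) := by
  let B : ℝ → ℝ := fun t ↦ A * Real.exp (∫ s in a..t, ω s)
  have hB : ∀ t, HasDerivAt B (ω t * B t) t := fun t ↦
    ((hω.integral_hasStrictDerivAt a t).hasDerivAt.exp.const_mul A).congr_deriv (by ring)
  have hAB : ∀ t ≥ a, A ≤ B t := fun t ht ↦ le_mul_of_one_le_right hA <|
    Real.one_le_exp (intervalIntegral.integral_nonneg ht fun s _ ↦ hω0 s)
  refine image_le_of_deriv_right_lt_deriv_boundary
    (fun s hs ↦ (hf s hs.1).continuousAt.continuousWithinAt)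
    (fun s hs ↦ (hf s hs.1).hasDerivWithinAt) (hfa.trans (hAB a le_rfl)) hB
    (fun s hs htouch ↦ ?_) ⟨ht, le_rfl⟩
  exact htouch ▸ hlt s hs.1 (htouch ▸ hAB s hs.1)

theorem exists_forall_le_of_deriv_le_mul {f f' φ : ℝ → ℝ} {a c : ℝ}
    (hf : ∀ t ≥ a, HasDerivAt f (f' t) t) (hφ : ContinuousOn φ (Ici a)) (hφ0 : ∀ t ≥ a, 0 ≤ φ t)
    (hint : IntegrableOn φ (Ici a)) (hle : ∀ t ≥ a, c < f t → f' t ≤ φ t * f t) :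
    ∃ M, ∀ t ≥ a, f t ≤ M := by
  -- The summand `exp (-s)` makes the differential inequality strict and is integrable.
  let ω : ℝ → ℝ := fun s ↦ φ (max a s) + Real.exp (-s)
  have hω : Continuous ω :=
    (hφ.comp_continuous (by fun_prop) fun s ↦ mem_Ici.2 (le_max_left a s)).add (by fun_prop)
  have hω0 : ∀ s, 0 ≤ ω s := fun s ↦ add_nonneg (hφ0 _ (le_max_left _ _)) (Real.exp_pos _).le
  have hω_eq : ∀ s ≥ a, φ s + Real.exp (-s) = ω s := fun s hs ↦ by simp only [ω, max_eq_right hs]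
  have hω_int : IntegrableOn ω (Ioi a) :=
    ((hint.mono_set Ioi_subset_Ici_self).add (integrableOn_exp_neg_Ioi a)).congr_fun
      (fun s hs ↦ hω_eq s (le_of_lt hs)) measurableSet_Ioi
  obtain ⟨A, hA⟩ := exists_gt (max (f a) (max c 0))
  obtain ⟨hfA, hcA, hA0⟩ : f a < A ∧ c < A ∧ 0 < A := by simpa only [max_lt_iff] using hA
  refine ⟨A * Real.exp (∫ s in Ioi a, ω s), fun t ht ↦ ?_⟩
  have hstrict : ∀ s ≥ a, A ≤ f s → f' s < ω s * f s := fun s hs hAf ↦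
    calc f' s ≤ φ s * f s := hle s hs (hcA.trans_le hAf)
      _ < (φ s + Real.exp (-s)) * f s :=
        mul_lt_mul_of_pos_right (lt_add_of_pos_right _ (Real.exp_pos _)) (hA0.trans_le hAf)
      _ = ω s * f s := by rw [hω_eq s hs]
  have hmass : ∫ s in a..t, ω s ≤ ∫ s in Ioi a, ω s := by
    rw [intervalIntegral.integral_of_le ht]
    exact setIntegral_mono_set hω_int (.of_forall hω0) Ioc_subset_Ioi_self.eventuallyLE
  calc f t ≤ A * Real.exp (∫ s in a..t, ω s) :=
        le_mul_exp_integral_of_deriv_lt_mul hA0.le hf hω hω0 hfA.le hstrict ht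
    _ ≤ A * Real.exp (∫ s in Ioi a, ω s) := by gcongr

theorem exists_forall_rpow_mul_le_of_dissipation {e e' b w : ℝ → ℝ} {T p c D : ℝ} (hT : 0 < T)
    (hpc : p ≤ c) (he : ∀ t ≥ T, HasDerivAt e (e' t) t)
    (hb : ContinuousOn b (Ici T)) (hb0 : ∀ t ≥ T, 0 ≤ b t)
    (hint : IntegrableOn (fun t ↦ t ^ (p / 2 + 1) * b t) (Ici T))
    (hdiss : ∀ t ≥ T, t * e' t + c * e t ≤ t ^ 2 * (b t * w t))
    (hcoer : ∀ t ≥ T, t ^ p * (1 / 2 * w t ^ 2) ≤ t ^ p * e t + D) :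
    ∃ M, ∀ t ≥ T, t ^ p * e t ≤ M := by
  suffices ∃ M, ∀ t ≥ T, t ^ p * e t + (D + 1) ≤ M by
    obtain ⟨M, hM⟩ := this
    exact ⟨M - (D + 1), fun t ht ↦ le_sub_iff_add_le.2 (hM t ht)⟩
  refine exists_forall_le_of_deriv_le_mul (c := D + 1)
    (fun t ht ↦ ((Real.hasDerivAt_rpow_const (Or.inl (hT.trans_le ht).ne')).mul
      (he t ht)).add_const (D + 1))
    ((continuousOn_rpow_const_Ici hT _).mul hb)
    (fun t ht ↦ mul_nonneg (Real.rpow_nonneg (hT.le.trans ht) _) (hb0 t ht)) hint ?_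
  intro t ht hpos
  have ht0 : 0 < t := hT.trans_le ht
  have he0 : 0 < e t :=
    (mul_pos_iff_of_pos_left (by positivity)).1 ((lt_add_iff_pos_left _).1 hpos)
  have hb0 := hb0 t ht
  have hhalf : t ^ p = t ^ (p / 2) * t ^ (p / 2) := by rw [← Real.rpow_add ht0, add_halves]
  have hyoung : t ^ (p / 2) * w t ≤ t ^ p * e t + (D + 1) := by
    have := hcoer t ht
    rw [hhalf] at this ⊢
    linarith [sq_nonneg (t ^ (p / 2) * w t - 1)]
  calc p * t ^ (p - 1) * e t + t ^ p * e' t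
      = t ^ (p - 1) * (t * e' t + p * e t) := by rw [Real.rpow_sub_one ht0.ne']; field_simp; ring
    _ ≤ t ^ (p - 1) * (t ^ 2 * (b t * w t)) := by
        gcongr
        linarith [hdiss t ht, mul_le_mul_of_nonneg_right hpc he0.le]
    _ = t ^ (p / 2 + 1) * b t * (t ^ (p / 2) * w t) := by
        rw [Real.rpow_sub_one ht0.ne', Real.rpow_add_one ht0.ne', hhalf]; field_simp
    _ ≤ t ^ (p / 2 + 1) * b t * (t ^ p * e t + (D + 1)) := by gcongr

end Gronwall

section Convex

theorem sub_le_inner_gradient_of_convexOn {E : Type*} [NormedAddCommGroup E]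
    [InnerProductSpace ℝ E] [CompleteSpace E] {F : E → ℝ} (hconv : ConvexOn ℝ univ F) {y : E}
    (hdiff : DifferentiableAt ℝ F y) (z : E) : F y - F z ≤ ⟪∇ F y, y - z⟫ := by
  have hline : HasDerivAt (F ∘ AffineMap.lineMap (k := ℝ) y z) ⟪∇ F y, z - y⟫ 0 := by
    rw [inner_gradient_left]
    refine HasFDerivAt.comp_hasDerivAt 0 ?_ AffineMap.hasDerivAt_lineMap
    simpa only [AffineMap.lineMap_apply_zero] using hdiff.hasFDerivAt
  have hslope := (hconv.comp_affineMap (AffineMap.lineMap (k := ℝ) y z)).le_slope_of_hasDerivAt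
    (mem_univ 0) (mem_univ 1) one_pos hline
  simp only [slope_def_field, Function.comp_apply, AffineMap.lineMap_apply_zero,
    AffineMap.lineMap_apply_one, sub_zero, div_one] at hslope
  rw [← neg_sub z y, inner_neg_right]
  linarith

variable {E : Type*} [NormedAddCommGroup E] [NormedSpace ℝ E] {F : E → ℝ} {z : E}

theorem le_apply_of_forall_mem_sphere_le {ρ c : ℝ} (hconv : ConvexOn ℝ univ F) (hρ : 0 < ρ)
    (hz : F z < c) (hsphere : ∀ w ∈ Metric.sphere z ρ, c ≤ F w) {y : E} (hy : ρ ≤ ‖y - z‖) :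
    c ≤ F y := by
  have hpos : 0 < ‖y - z‖ := hρ.trans_le hy
  let w : E := AffineMap.lineMap z y (ρ / ‖y - z‖)
  have hw_sphere : w ∈ Metric.sphere z ρ := by
    rw [Metric.mem_sphere, dist_lineMap_left, dist_eq_norm', Real.norm_of_nonneg (by positivity),
      div_mul_cancel₀ _ hpos.ne']
  have hw_segment : w ∈ segment ℝ z y := by
    rw [segment_eq_image_lineMap]
    exact mem_image_of_mem _ ⟨by positivity, (div_le_one hpos).2 hy⟩
  have hmax : c ≤ max (F z) (F y) := (hsphere w hw_sphere).trans
    (hconv.le_max_of_mem_segment (mem_univ z) (mem_univ y) hw_segment)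
  exact (le_max_iff.1 hmax).resolve_left hz.not_ge

theorem tendsto_of_tendsto_apply_of_growth {ι : Type*} {l : Filter ι} {u : ι → E} {K q : ℝ}
    (hconv : ConvexOn ℝ univ F) (hK : 0 < K) (hgrow : ∀ᶠ y in 𝓝 z, K * ‖y - z‖ ^ q ≤ F y - F z)
    (hu : Tendsto (fun i ↦ F (u i)) l (𝓝 (F z))) : Tendsto u l (𝓝 z) := by
  obtain ⟨ε, hε, hgrow⟩ := Metric.eventually_nhds_iff.1 hgrow
  refine Metric.tendsto_nhds.2 fun δ hδ ↦ ?_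
  obtain ⟨ρ, hρ, hρlt⟩ := exists_between (lt_min hε hδ)
  obtain ⟨hρε, hρδ⟩ := lt_min_iff.1 hρlt
  have hlevel : F z < F z + K * ρ ^ q := lt_add_of_pos_right _ (by positivity)
  filter_upwards [hu.eventually_lt_const hlevel] with i hi
  by_contra! hfar
  refine hi.not_ge (le_apply_of_forall_mem_sphere_le hconv hρ hlevel (fun w hw ↦ ?_)
    (hρδ.le.trans (hfar.trans_eq (dist_eq_norm _ _))))
  have hw' : ‖w - z‖ = ρ := mem_sphere_iff_norm.1 hw
  have := hgrow (hw.trans_lt hρε)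
  rw [hw'] at this
  linarith

end Convex

section Inertial

variable {E : Type*} [NormedAddCommGroup E] [InnerProductSpace ℝ E]

/-- The combination `κ (x - z) + t v` of position and velocity whose norm enters the Lyapunov
energy; `κ` is the parameter usually written `λ`. -/
def anchoredVelocity (z : E) (κ : ℝ) (x v : ℝ → E) (t : ℝ) : E :=
  κ • (x t - z) + t • v t

/-- The Lyapunov energy, anchored at `z`, of a curve `x` with velocity `v`. -/
noncomputable def inertialEnergy (F : E → ℝ) (z : E) (κ ξ : ℝ) (x v : ℝ → E) (t : ℝ) : ℝ :=
  t ^ 2 * (F (x t) - F z) + 1 / 2 * ‖anchoredVelocity z κ x v t‖ ^ 2 + ξ / 2 * ‖x t - z‖ ^ 2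

variable {F : E → ℝ} {z : E} {α κ ξ T : ℝ} {g x v : ℝ → E}

theorem norm_anchoredVelocity_sq (t : ℝ) :
    ‖anchoredVelocity z κ x v t‖ ^ 2 =
      κ ^ 2 * ‖x t - z‖ ^ 2 + 2 * κ * (t * ⟪x t - z, v t⟫) + t ^ 2 * ‖v t‖ ^ 2 := by
  rw [anchoredVelocity, norm_add_sq_real, norm_smul, norm_smul, mul_pow, mul_pow,
    Real.norm_eq_abs, Real.norm_eq_abs, sq_abs, sq_abs, real_inner_smul_left,
    real_inner_smul_right]
  ring

variable [CompleteSpace E]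

/-- `x` solves `x'' + (α / t) x' + ∇F(x) = g` on `[T, ∞)`, with velocity `v = x'`. The equation is
recorded as a formula for the derivative of `v`, so that the acceleration needs no name. -/
structure IsInertialSolution (F : E → ℝ) (α T : ℝ) (g x v : ℝ → E) : Prop where
  hasDerivAt : ∀ t ≥ T, HasDerivAt x (v t) t
  hasDerivAt_velocity : ∀ t ≥ T, HasDerivAt v (g t - (α / t) • v t - ∇ F (x t)) t

/-- The time derivative of `inertialEnergy` along a solution, expressed without `x''`; see
`IsInertialSolution.hasDerivAt_inertialEnergy`. -/
noncomputable def inertialEnergyDeriv (F : E → ℝ) (z : E) (α κ ξ : ℝ) (g x v : ℝ → E) (t : ℝ) : ℝ :=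
  2 * t * (F (x t) - F z) - κ * t * ⟪∇ F (x t), x t - z⟫ + (κ + 1 - α) * t * ‖v t‖ ^ 2 +
    (κ * (κ + 1 - α) + ξ) * ⟪x t - z, v t⟫ + t * ⟪g t, anchoredVelocity z κ x v t⟫

theorem mul_inertialEnergyDeriv_add_mul_inertialEnergy (c t : ℝ) :
    t * inertialEnergyDeriv F z α κ ξ g x v t + c * inertialEnergy F z κ ξ x v t =
      (2 + c) * (t ^ 2 * (F (x t) - F z)) - κ * (t ^ 2 * ⟪∇ F (x t), x t - z⟫) +
      (κ + 1 - α + c / 2) * (t ^ 2 * ‖v t‖ ^ 2) +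
      (κ * (κ + 1 - α) + ξ + c * κ) * (t * ⟪x t - z, v t⟫) +
      c / 2 * (κ ^ 2 + ξ) * ‖x t - z‖ ^ 2 + t ^ 2 * ⟪g t, anchoredVelocity z κ x v t⟫ := by
  rw [inertialEnergy, inertialEnergyDeriv, norm_anchoredVelocity_sq]
  ring

-- `ξ` is chosen so that the `⟪x - z, v⟫` term in the balance with `c = κ - 2` vanishes.
theorem dissipation_of_sub_le_inner {t : ℝ} (hκ : 0 ≤ κ) (hκ2 : κ ≤ 2) (hκα : 3 * κ ≤ 2 * α)
    (hF : F (x t) - F z ≤ ⟪∇ F (x t), x t - z⟫) :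
    t * inertialEnergyDeriv F z α κ (κ * (1 + α - 2 * κ)) g x v t +
      (κ - 2) * inertialEnergy F z κ (κ * (1 + α - 2 * κ)) x v t ≤
      t ^ 2 * ⟪g t, anchoredVelocity z κ x v t⟫ := by
  rw [mul_inertialEnergyDeriv_add_mul_inertialEnergy]
  have hvalue : 0 ≤ κ * (t ^ 2 * (⟪∇ F (x t), x t - z⟫ - (F (x t) - F z))) :=
    mul_nonneg hκ (mul_nonneg (sq_nonneg t) (sub_nonneg.2 hF))
  have hvelocity : 0 ≤ (α - 3 / 2 * κ) * (t ^ 2 * ‖v t‖ ^ 2) :=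
    mul_nonneg (by linarith) (by positivity)
  have hposition : 0 ≤ (2 - κ) / 2 * (κ * (1 + α - κ)) * ‖x t - z‖ ^ 2 :=
    mul_nonneg (mul_nonneg (by linarith) (mul_nonneg hκ (by linarith))) (sq_nonneg _)
  linarith

-- `ξ` is chosen so that, with `c = 2 κ`, the quadratic terms add up to a multiple of
-- `‖anchoredVelocity‖²`.
theorem dissipation_of_mul_sub_le_inner {γ t : ℝ} (hκ : 0 ≤ κ) (hκγ : κ * (γ - 2) = 2)
    (hκα : 2 * κ + 1 ≤ α) (hF : γ * (F (x t) - F z) ≤ ⟪∇ F (x t), x t - z⟫) :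
    t * inertialEnergyDeriv F z α κ (κ * (κ + 1 - α)) g x v t +
      2 * κ * inertialEnergy F z κ (κ * (κ + 1 - α)) x v t ≤
      t ^ 2 * ⟪g t, anchoredVelocity z κ x v t⟫ := by
  rw [mul_inertialEnergyDeriv_add_mul_inertialEnergy]
  have hvalue : 0 ≤ κ * (t ^ 2 * (⟪∇ F (x t), x t - z⟫ - γ * (F (x t) - F z))) :=
    mul_nonneg hκ (mul_nonneg (sq_nonneg t) (sub_nonneg.2 hF))
  have hcoeff : 2 + 2 * κ = κ * γ := by linarith
  have hquadratic : 0 ≤ (α - 1 - 2 * κ) * ‖anchoredVelocity z κ x v t‖ ^ 2 :=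
    mul_nonneg (by linarith) (sq_nonneg _)
  rw [norm_anchoredVelocity_sq] at hquadratic
  rw [hcoeff]
  linarith

namespace IsInertialSolution

theorem of_ode {a : ℝ → E} (hx : ∀ t ≥ T, HasDerivAt x (v t) t)
    (hv : ∀ t ≥ T, HasDerivAt v (a t) t)
    (hode : ∀ t ≥ T, a t + (α / t) • v t + ∇ F (x t) = g t) : IsInertialSolution F α T g x v :=
  ⟨hx, fun t ht ↦ (hv t ht).congr_deriv (by rw [← hode t ht]; abel)⟩

theorem mono {T' : ℝ} (hs : IsInertialSolution F α T g x v) (hT : T ≤ T') :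
    IsInertialSolution F α T' g x v :=
  ⟨fun t ht ↦ hs.hasDerivAt t (hT.trans ht), fun t ht ↦ hs.hasDerivAt_velocity t (hT.trans ht)⟩

theorem hasDerivAt_comp (hs : IsInertialSolution F α T g x v) (hF : Differentiable ℝ F) {t : ℝ}
    (ht : T ≤ t) : HasDerivAt (fun t ↦ F (x t)) ⟪∇ F (x t), v t⟫ t := by
  rw [inner_gradient_left]
  exact (hF (x t)).hasFDerivAt.comp_hasDerivAt t (hs.hasDerivAt t ht)

theorem hasDerivAt_anchoredVelocity (hs : IsInertialSolution F α T g x v) {t : ℝ} (ht : T ≤ t)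
    (ht0 : t ≠ 0) : HasDerivAt (anchoredVelocity z κ x v)
      ((κ + 1 - α) • v t + t • (g t - ∇ F (x t))) t := by
  refine ((((hs.hasDerivAt t ht).sub_const z).const_smul κ).add
    ((hasDerivAt_id t).smul (hs.hasDerivAt_velocity t ht))).congr_deriv ?_
  have hdamp : t • (α / t) • v t = α • v t := by rw [smul_smul, mul_div_cancel₀ _ ht0]
  simp only [id, smul_sub, hdamp]
  module

theorem hasDerivAt_inertialEnergy (hs : IsInertialSolution F α T g x v) (hF : Differentiable ℝ F)
    {t : ℝ} (ht : T ≤ t) (ht0 : t ≠ 0) :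
    HasDerivAt (inertialEnergy F z κ ξ x v) (inertialEnergyDeriv F z α κ ξ g x v t) t := by
  refine ((((hasDerivAt_pow 2 t).mul ((hs.hasDerivAt_comp hF ht).sub_const (F z))).add
    ((hs.hasDerivAt_anchoredVelocity ht ht0).norm_sq.const_mul (1 / 2))).add
    (((hs.hasDerivAt t ht).sub_const z).norm_sq.const_mul (ξ / 2))).congr_deriv ?_
  rw [inertialEnergyDeriv, real_inner_comm _ (g t), real_inner_comm (x t - z) (∇ F (x t)),
    real_inner_comm (v t) (∇ F (x t)), anchoredVelocity]
  simp only [inner_add_left, inner_add_right, inner_sub_right, real_inner_smul_left,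
    real_inner_smul_right, real_inner_self_eq_norm_sq]
  push_cast
  ring

theorem exists_forall_rpow_mul_sub_le_of_dissipation {p c D : ℝ}
    (hs : IsInertialSolution F α T g x v) (hF : Differentiable ℝ F) (hT : 0 < T) (hpc : p ≤ c)
    (hg : ContinuousOn g (Ici T)) (hint : IntegrableOn (fun t ↦ t ^ (p / 2 + 1) * ‖g t‖) (Ici T))
    (hdiss : ∀ t ≥ T, t * inertialEnergyDeriv F z α κ ξ g x v t + c * inertialEnergy F z κ ξ x v t ≤
      t ^ 2 * ⟪g t, anchoredVelocity z κ x v t⟫)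
    (hmin : ∀ t ≥ T, F z ≤ F (x t))
    (habsorb : ∀ t ≥ T, -ξ / 2 * (t ^ p * ‖x t - z‖ ^ 2) ≤
      1 / 2 * (t ^ (p + 2) * (F (x t) - F z)) + D) :
    ∃ M, ∀ t ≥ T, t ^ (p + 2) * (F (x t) - F z) ≤ M := by
  have hsplit : ∀ t ≥ T, t ^ p * (1 / 2 * ‖anchoredVelocity z κ x v t‖ ^ 2) +
      1 / 2 * (t ^ (p + 2) * (F (x t) - F z)) ≤ t ^ p * inertialEnergy F z κ ξ x v t + D := by
    intro t ht
    have hpow : t ^ (p + 2) = t ^ p * t ^ 2 := by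
      rw [Real.rpow_add (hT.trans_le ht), Real.rpow_two]
    have := habsorb t ht
    rw [hpow] at this ⊢
    rw [inertialEnergy]
    linarith
  have hvalue : ∀ t ≥ T, 0 ≤ t ^ (p + 2) * (F (x t) - F z) := fun t ht ↦
    mul_nonneg (Real.rpow_nonneg (hT.le.trans ht) _) (sub_nonneg.2 (hmin t ht))
  obtain ⟨M, hM⟩ : ∃ M, ∀ t ≥ T, t ^ p * inertialEnergy F z κ ξ x v t ≤ M := by
    refine exists_forall_rpow_mul_le_of_dissipation (D := D)
      (w := fun t ↦ ‖anchoredVelocity z κ x v t‖) hT hpc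
      (fun t ht ↦ hs.hasDerivAt_inertialEnergy hF ht (hT.trans_le ht).ne') hg.norm
      (fun _ _ ↦ norm_nonneg _) hint
      (fun t ht ↦ (hdiss t ht).trans ?_) (fun t ht ↦ by linarith [hsplit t ht, hvalue t ht])
    gcongr
    exact real_inner_le_norm _ _
  refine ⟨2 * (M + D), fun t ht ↦ ?_⟩
  have hsq : 0 ≤ t ^ p * (1 / 2 * ‖anchoredVelocity z κ x v t‖ ^ 2) :=
    mul_nonneg (Real.rpow_nonneg (hT.le.trans ht) _) (by positivity)
  linarith [hM t ht, hsplit t ht]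

theorem exists_forall_rpow_mul_sub_le (hs : IsInertialSolution F α T g x v)
    (hF : Differentiable ℝ F) (hT : 0 < T) (hg : ContinuousOn g (Ici T))
    (hκ : 0 ≤ κ) (hκ2 : κ ≤ 2) (hκα : 3 * κ ≤ 2 * α)
    (hint : IntegrableOn (fun t ↦ t ^ (κ / 2) * ‖g t‖) (Ici T))
    (hmin : ∀ t ≥ T, F z ≤ F (x t))
    (hinner : ∀ t ≥ T, F (x t) - F z ≤ ⟪∇ F (x t), x t - z⟫) :
    ∃ M, ∀ t ≥ T, t ^ κ * (F (x t) - F z) ≤ M := by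
  have hexp : (κ - 2) / 2 + 1 = κ / 2 := by ring
  have hξ : 0 ≤ κ * (1 + α - 2 * κ) := mul_nonneg hκ (by linarith)
  simpa only [sub_add_cancel] using hs.exists_forall_rpow_mul_sub_le_of_dissipation (D := 0) hF hT
    le_rfl hg (hexp ▸ hint) (fun t ht ↦ dissipation_of_sub_le_inner hκ hκ2 hκα (hinner t ht)) hmin
    fun t ht ↦ by
      have ht0 : 0 < t := hT.trans_le ht
      have hposition : 0 ≤ κ * (1 + α - 2 * κ) * (t ^ (κ - 2) * ‖x t - z‖ ^ 2) := by positivity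
      have hvalue : 0 ≤ t ^ (κ - 2 + 2) * (F (x t) - F z) :=
        mul_nonneg (by positivity) (sub_nonneg.2 (hmin t ht))
      linarith

theorem tendsto_apply_of_convexOn (hs : IsInertialSolution F α T g x v)
    (hF : Differentiable ℝ F) (hconv : ConvexOn ℝ univ F) (hmin : ∀ y, F z ≤ F y) (hT : 0 < T)
    (hg : ContinuousOn g (Ici T)) (hκ : 0 < κ) (hκ2 : κ ≤ 2) (hκα : 3 * κ ≤ 2 * α)
    (hint : IntegrableOn (fun t ↦ t ^ (κ / 2) * ‖g t‖) (Ici T)) :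
    Tendsto (fun t ↦ F (x t)) atTop (𝓝 (F z)) := by
  obtain ⟨M, hM⟩ := hs.exists_forall_rpow_mul_sub_le hF hT hg hκ.le hκ2 hκα hint
    (fun t _ ↦ hmin (x t)) fun t _ ↦ sub_le_inner_gradient_of_convexOn hconv (hF (x t)) z
  exact tendsto_sub_nhds_zero_iff.1 <|
    tendsto_zero_of_rpow_mul_le hκ (fun t _ ↦ sub_nonneg.2 (hmin (x t))) hM

theorem exists_forall_rpow_mul_sub_le_of_growth {γ₁ γ₂ K : ℝ}
    (hs : IsInertialSolution F α T g x v) (hF : Differentiable ℝ F) (hT : 0 < T)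
    (hg : ContinuousOn g (Ici T)) (hγ₁ : 2 < γ₁) (hγ : γ₁ ≤ γ₂) (hα : (γ₁ + 2) / (γ₁ - 2) ≤ α)
    (hint : IntegrableOn (fun t ↦ t ^ (γ₂ / (γ₂ - 2)) * ‖g t‖) (Ici T)) (hK : 0 < K)
    (hinner : ∀ t ≥ T, γ₁ * (F (x t) - F z) ≤ ⟪∇ F (x t), x t - z⟫)
    (hgrow : ∀ t ≥ T, K * ‖x t - z‖ ^ γ₂ ≤ F (x t) - F z) :
    ∃ M, ∀ t ≥ T, t ^ (2 * γ₂ / (γ₂ - 2)) * (F (x t) - F z) ≤ M := by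
  have hγ₁' : 0 < γ₁ - 2 := sub_pos.2 hγ₁
  have hγ₂' : 0 < γ₂ - 2 := by linarith
  set κ := 2 / (γ₁ - 2) with hκ_def
  set p := 4 / (γ₂ - 2) with hp_def
  have hκ : 0 ≤ κ := by positivity
  have hκγ : κ * (γ₁ - 2) = 2 := div_mul_cancel₀ _ hγ₁'.ne'
  have hκα : 2 * κ + 1 ≤ α := hα.trans_eq' (by rw [hκ_def]; field_simp; ring)
  have hpκ : p ≤ 2 * κ := by
    rw [hκ_def, ← mul_div_assoc, hp_def]
    exact div_le_div₀ (by norm_num) (by norm_num) hγ₁' (by linarith)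
  have hexp_growth : p * (γ₂ / 2) = p + 2 := by rw [hp_def]; field_simp; ring
  have hexp_rate : 2 * γ₂ / (γ₂ - 2) = p + 2 := by rw [hp_def]; field_simp; ring
  have hexp_int : γ₂ / (γ₂ - 2) = p / 2 + 1 := by rw [hp_def]; field_simp; ring
  have hξ : 0 ≤ -(κ * (κ + 1 - α)) / 2 := by
    linarith [mul_nonneg hκ (show 0 ≤ α - (κ + 1) by linarith)]
  obtain ⟨C, hC⟩ := exists_mul_rpow_mul_sq_le hξ (half_pos hK) (hγ₁.trans_le hγ) hexp_growth
  rw [hexp_rate]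
  rw [hexp_int] at hint
  refine hs.exists_forall_rpow_mul_sub_le_of_dissipation (D := C) hF hT hpκ hg hint
    (fun t ht ↦ dissipation_of_mul_sub_le_inner hκ hκγ hκα (hinner t ht))
    (fun t ht ↦ sub_nonneg.1 (le_trans (by positivity) (hgrow t ht))) fun t ht ↦ ?_
  have ht0 : 0 < t := hT.trans_le ht
  calc -(κ * (κ + 1 - α)) / 2 * (t ^ p * ‖x t - z‖ ^ 2)
      ≤ K / 2 * (t ^ (p + 2) * ‖x t - z‖ ^ γ₂) + C := hC t ht0 _ (norm_nonneg _)
    _ = 1 / 2 * (t ^ (p + 2) * (K * ‖x t - z‖ ^ γ₂)) + C := by ring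
    _ ≤ 1 / 2 * (t ^ (p + 2) * (F (x t) - F z)) + C := by
      gcongr
      exact hgrow t ht

end IsInertialSolution

theorem stmt_8_general {γ₁ γ₂ t₀ : ℝ} (hmin : ∀ y, F z ≤ F y) (hconv : ConvexOn ℝ univ F)
    (hdiff : Differentiable ℝ F) (ht₀ : 0 < t₀) (hγ₁ : 2 < γ₁) (hγ : γ₁ ≤ γ₂)
    (hα : (γ₁ + 2) / (γ₁ - 2) ≤ α) (hg : ContinuousOn g (Ici t₀))
    (hs : IsInertialSolution F α t₀ g x v)
    (hH1 : ∀ᶠ y in 𝓝 z, F y - F z ≤ 1 / γ₁ * ⟪∇ F y, y - z⟫)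
    (hH2 : ∃ K > 0, ∀ᶠ y in 𝓝 z, K * ‖y - z‖ ^ γ₂ ≤ F y - F z)
    (hint : IntegrableOn (fun t ↦ t ^ (γ₂ / (γ₂ - 2)) * ‖g t‖) (Ici t₀)) :
    ∃ C > 0, ∃ t₁ ≥ t₀, ∀ t ≥ t₁, F (x t) - F z ≤ C * t ^ (-(2 * γ₂ / (γ₂ - 2))) := by
  obtain ⟨K, hK, hgrow⟩ := hH2
  have hα1 : 1 ≤ α := hα.trans' ((one_le_div (by linarith)).2 (by linarith))
  have hexp : 1 ≤ γ₂ / (γ₂ - 2) := (one_le_div (by linarith)).2 (by linarith)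
  have hvalues : Tendsto (fun t ↦ F (x t)) atTop (𝓝 (F z)) :=
    hs.tendsto_apply_of_convexOn (κ := 2 / 3) hdiff hconv hmin ht₀ hg (by norm_num) (by norm_num)
      (by linarith) (integrableOn_rpow_mul_of_le ht₀ (by linarith) hg.norm hint)
  have hlim : Tendsto x atTop (𝓝 z) := tendsto_of_tendsto_apply_of_growth hconv hK hgrow hvalues
  obtain ⟨t₁, hlocal⟩ := eventually_atTop.1 <|
    (eventually_ge_atTop t₀).and (hlim.eventually (hH1.and hgrow))
  have ht₁ : t₀ ≤ t₁ := (hlocal t₁ le_rfl).1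
  have hIci : Ici t₁ ⊆ Ici t₀ := Ici_subset_Ici.2 ht₁
  obtain ⟨M, hM⟩ := (hs.mono ht₁).exists_forall_rpow_mul_sub_le_of_growth hdiff (ht₀.trans_le ht₁)
    (hg.mono hIci) hγ₁ hγ hα (hint.mono_set hIci) hK
    (fun t ht ↦ (le_inv_mul_iff₀ (by linarith)).1 (by simpa only [one_div] using (hlocal t ht).2.1))
    (fun t ht ↦ (hlocal t ht).2.2)
  refine ⟨max M 1, by positivity, t₁, ht₁, fun t ht ↦ ?_⟩
  have ht0 : 0 < t := ht₀.trans_le (ht₁.trans ht)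
  rw [Real.rpow_neg ht0.le, ← div_eq_mul_inv, le_div_iff₀' (by positivity)]
  exact (hM t ht).trans (le_max_left _ _)

end Inertial

theorem stmt_8
    {n : ℕ} (hn : 1 ≤ n)
    (F : EuclideanSpace ℝ (Fin n) → ℝ) (Fstar : ℝ)
    (Xstar : Set (EuclideanSpace ℝ (Fin n)))
    (hXstar : Xstar = {z | ∀ y, F z ≤ F y})
    (hne : Xstar.Nonempty)
    (hFstar : ∀ z ∈ Xstar, F z = Fstar)
    (hconv : ConvexOn ℝ Set.univ F)
    (hdiff : Differentiable ℝ F)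
    (α t₀ γ₁ γ₂ : ℝ) (ht₀ : 0 < t₀) (hγ₁ : 2 < γ₁) (hγ₁₂ : γ₁ ≤ γ₂)
    (hαge : (γ₁ + 2) / (γ₁ - 2) ≤ α)
    (g x x' x'' : ℝ → EuclideanSpace ℝ (Fin n))
    (hg : ContinuousOn g (Set.Ici t₀))
    (hx : ∀ t ∈ Set.Ici t₀, HasDerivAt x (x' t) t)
    (hx'd : ∀ t ∈ Set.Ici t₀, HasDerivAt x' (x'' t) t)
    (hx''c : ContinuousOn x'' (Set.Ici t₀))
    (hode : ∀ t ∈ Set.Ici t₀, x'' t + (α / t) • x' t + gradient F (x t) = g t)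
    (hH1 : ∀ z ∈ Xstar, ∃ η > 0, ∀ y : EuclideanSpace ℝ (Fin n),
      ‖y - z‖ < η → F y - Fstar ≤ (1 / γ₁) * ⟪gradient F y, y - z⟫)
    (hH2 : ∀ z ∈ Xstar, ∃ K > 0, ∃ ε > 0, ∀ y : EuclideanSpace ℝ (Fin n),
      ‖y - z‖ < ε → K * Metric.infDist y Xstar ^ (γ₂ : ℝ) ≤ F y - Fstar)
    (huniq : ∃ z, Xstar = {z})
    (hint : IntegrableOn (fun t : ℝ => t ^ (γ₂ / (γ₂ - 2)) * ‖g t‖) (Set.Ici t₀)) :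
    ∃ C > 0, ∃ t₁ ≥ t₀, ∀ t ≥ t₁,
      F (x t) - Fstar ≤ C * t ^ (-(2 * γ₂ / (γ₂ - 2))) := by
  obtain ⟨z, rfl⟩ := huniq
  obtain rfl := hFstar z rfl
  simp only [Metric.infDist_singleton, dist_eq_norm] at hH2
  have hnear : ∀ {P : EuclideanSpace ℝ (Fin n) → Prop},
      (∃ ε > 0, ∀ y, ‖y - z‖ < ε → P y) → ∀ᶠ y in 𝓝 z, P y := fun h ↦
    Metric.eventually_nhds_iff.2 (by simpa only [dist_eq_norm] using h)
  exact stmt_8_general (hXstar.le rfl) hconv hdiff ht₀ hγ₁ hγ₁₂ hαge hg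
    (.of_ode hx hx'd hode) (hnear (hH1 z rfl)) ((hH2 z rfl).imp fun _ ↦ And.imp_right hnear) hint
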